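/- Let Ω = T² × (0,d), let φ ∈ H²(Ω) be periodic in the first two variables, with φ = 0 on {x₃ = d} and ∂₃φ = (L/2)·sin(2φ) on {x₃ = 0}, L > 0. Then there is a constant C depending only on L and d such that ∫_Ω |∇²φ|² ≤ C·(∫_Ω (Δφ)² + ∫_Ω |∇φ|²). -/

import Mathlib

/-!
The pointwise identity `|∇²φ|² = (Δφ)² + 2 ∑_{i<j} (φᵢⱼ² - φᵢᵢ φⱼⱼ)` reduces the estimate to the
integrals of the three `2 × 2` minors. Each minor is a Jacobian of two first derivatives, hence a
null Lagrangian, and integrates to boundary terms (`integral_jacobian`).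

* For the tangential pair `(1, 2)` these cancel by periodicity.
* For a pair `(i, 3)` the top contributes nothing because `φᵢ = 0` there, and the bottom contributes
  `-∫ φᵢ φᵢ₃ = -L ∫ cos (2φ) φᵢ² ≤ L ∫_{x₃ = 0} φᵢ²`. The trace inequality
  `L φᵢ(·, 0)² ≤ ∫ (½ φᵢ₃² + 2 L² φᵢ²)` (`sq_le_of_zero_right`) lets the second derivatives be
  absorbed into the left-hand side, giving the constant `2 + 8 L²`.

As `φ` is only `C²`, third derivatives are not available, so `integral_jacobian` is proved for `C¹`
functions by differentiating a translation identity instead of integrating by parts twice.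
-/

open Real MeasureTheory




/-- Partial derivative in the first coordinate of `ℝ × ℝ × ℝ`. -/
noncomputable def pd1 (f : ℝ × ℝ × ℝ → ℝ) (x : ℝ × ℝ × ℝ) : ℝ :=
  fderiv ℝ f x (1, 0, 0)

/-- Partial derivative in the second coordinate of `ℝ × ℝ × ℝ`. -/
noncomputable def pd2 (f : ℝ × ℝ × ℝ → ℝ) (x : ℝ × ℝ × ℝ) : ℝ :=
  fderiv ℝ f x (0, 1, 0)

/-- Partial derivative in the third (normal) coordinate of `ℝ × ℝ × ℝ`. -/
noncomputable def pd3 (f : ℝ × ℝ × ℝ → ℝ) (x : ℝ × ℝ × ℝ) : ℝ :=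
  fderiv ℝ f x (0, 0, 1)

/-- The box `(0,1) × (0,1) × (0,d)`, a fundamental domain of `T² × (0,d)`. -/
def box (d : ℝ) : Set (ℝ × ℝ × ℝ) :=
  Set.Ioo (0 : ℝ) 1 ×ˢ (Set.Ioo (0 : ℝ) 1 ×ˢ Set.Ioo (0 : ℝ) d)

/-- Squared Hessian `|∇²φ|²`. -/
noncomputable def hessSq (φ : ℝ × ℝ × ℝ → ℝ) (x : ℝ × ℝ × ℝ) : ℝ :=
  (pd1 (pd1 φ) x) ^ 2 + (pd1 (pd2 φ) x) ^ 2 + (pd1 (pd3 φ) x) ^ 2 +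
  (pd2 (pd1 φ) x) ^ 2 + (pd2 (pd2 φ) x) ^ 2 + (pd2 (pd3 φ) x) ^ 2 +
  (pd3 (pd1 φ) x) ^ 2 + (pd3 (pd2 φ) x) ^ 2 + (pd3 (pd3 φ) x) ^ 2

/-- Laplacian `Δφ`. -/
noncomputable def lap (φ : ℝ × ℝ × ℝ → ℝ) (x : ℝ × ℝ × ℝ) : ℝ :=
  pd1 (pd1 φ) x + pd2 (pd2 φ) x + pd3 (pd3 φ) x

/-- Squared gradient `|∇φ|²`. -/
noncomputable def gradSq (φ : ℝ × ℝ × ℝ → ℝ) (x : ℝ × ℝ × ℝ) : ℝ :=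
  (pd1 φ x) ^ 2 + (pd2 φ x) ^ 2 + (pd3 φ x) ^ 2



/-! ### Differentiation under the integral sign -/

lemma hasDerivAt_integral_param {f f' : ℝ × ℝ → ℝ} (hf : Continuous f) (hf' : Continuous f')
    (h : ∀ σ s, HasDerivAt (fun x => f (x, s)) (f' (σ, s)) σ) (a b σ₀ : ℝ) :
    HasDerivAt (fun σ => ∫ s in a..b, f (σ, s)) (∫ s in a..b, f' (σ₀, s)) σ₀ := by
  obtain ⟨M, hM⟩ := ((isCompact_closedBall σ₀ (1 : ℝ)).prod
    (isCompact_uIcc (a := a) (b := b))).exists_bound_of_continuousOn hf'.continuousOn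
  refine (intervalIntegral.hasDerivAt_integral_of_dominated_loc_of_deriv_le
    (F := fun σ s => f (σ, s)) (F' := fun σ s => f' (σ, s)) (bound := fun _ => M)
    (Metric.closedBall_mem_nhds σ₀ one_pos) ?_ ?_ ?_ ?_ ?_ ?_).2
  · exact Filter.Eventually.of_forall fun σ =>
      (by fun_prop : Continuous fun s => f (σ, s)).aestronglyMeasurable
  · exact (by fun_prop : Continuous fun s => f (σ₀, s)).intervalIntegrable _ _
  · exact (by fun_prop : Continuous fun s => f' (σ₀, s)).aestronglyMeasurable
  · exact Filter.Eventually.of_forall fun s hs σ hσ =>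
      hM (σ, s) ⟨hσ, Set.uIoc_subset_uIcc hs⟩
  · exact intervalIntegrable_const
  · exact Filter.Eventually.of_forall fun s _ σ _ => h σ s

lemma continuous_integral_param {X : Type*} [TopologicalSpace X] {f : X × ℝ → ℝ}
    (hf : Continuous f) (a b : ℝ) : Continuous fun x => ∫ s in a..b, f (x, s) :=
  intervalIntegral.continuous_parametric_intervalIntegral_of_continuous' (f := fun x s => f (x, s))
    hf a b

lemma hasDerivAt_integral_param₂ {f f' : ℝ × ℝ × ℝ → ℝ} (hf : Continuous f) (hf' : Continuous f')
    (h : ∀ σ p, HasDerivAt (fun x => f (x, p)) (f' (σ, p)) σ) (a b c e σ₀ : ℝ) :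
    HasDerivAt (fun σ => ∫ s in a..b, ∫ t in c..e, f (σ, s, t))
      (∫ s in a..b, ∫ t in c..e, f' (σ₀, s, t)) σ₀ := by
  refine hasDerivAt_integral_param (f := fun p => ∫ t in c..e, f (p.1, p.2, t))
    (f' := fun p => ∫ t in c..e, f' (p.1, p.2, t)) ?_ ?_ ?_ a b σ₀
  · exact continuous_integral_param (X := ℝ × ℝ) (f := fun q => f (q.1.1, q.1.2, q.2))
      (by fun_prop) c e
  · exact continuous_integral_param (X := ℝ × ℝ) (f := fun q => f' (q.1.1, q.1.2, q.2))
      (by fun_prop) c e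
  · intro σ s
    exact hasDerivAt_integral_param (f := fun p => f (p.1, s, p.2))
      (f' := fun p => f' (p.1, s, p.2)) (by fun_prop) (by fun_prop) (fun σ t => h σ (s, t)) _ _ _

/-! ### The null-Lagrangian identity and the trace inequality -/

/-- The Jacobian `∂ₜv ∂ₛw - ∂ₛv ∂ₜw` is a null Lagrangian: for functions 1-periodic in `s` its
integral reduces to boundary terms in `t`. For `C²` data this is two integrations by parts; for
merely `C¹` functions the second derivatives are avoided by translating `v` by `σ` in `s`,
integrating by parts in `t` only, moving the translation onto `w` by periodicity, and
differentiating the resulting identity at `σ = 0`. -/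
lemma integral_jacobian {v w vs vt ws wt : ℝ × ℝ → ℝ}
    (hv : Continuous v) (hw : Continuous w) (hvs : Continuous vs) (hvt : Continuous vt)
    (hws : Continuous ws) (hwt : Continuous wt)
    (dvs : ∀ s t, HasDerivAt (fun x => v (x, t)) (vs (s, t)) s)
    (dvt : ∀ s t, HasDerivAt (fun x => v (s, x)) (vt (s, t)) t)
    (dws : ∀ s t, HasDerivAt (fun x => w (x, t)) (ws (s, t)) s)
    (dwt : ∀ s t, HasDerivAt (fun x => w (s, x)) (wt (s, t)) t)
    (pv : ∀ s t, v (s + 1, t) = v (s, t)) (pw : ∀ s t, w (s + 1, t) = w (s, t))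
    (pvt : ∀ s t, vt (s + 1, t) = vt (s, t)) (b : ℝ) :
    ∫ s in (0:ℝ)..1, ∫ t in (0:ℝ)..b, (vt (s, t) * ws (s, t) - vs (s, t) * wt (s, t)) =
      (∫ s in (0:ℝ)..1, v (s, b) * ws (s, b)) - ∫ s in (0:ℝ)..1, v (s, 0) * ws (s, 0) := by
  have ii : ∀ {f : ℝ → ℝ}, Continuous f → ∀ a b : ℝ, IntervalIntegrable f volume a b :=
    fun hf a b => hf.intervalIntegrable a b
  have key : ∀ σ : ℝ, ∫ s in (0:ℝ)..1, ∫ t in (0:ℝ)..b, v (s + σ, t) * wt (s, t) =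
      (∫ s in (0:ℝ)..1, (v (s, b) * w (s - σ, b) - v (s, 0) * w (s - σ, 0)))
      - ∫ s in (0:ℝ)..1, ∫ t in (0:ℝ)..b, vt (s, t) * w (s - σ, t) := by
    intro σ
    set G : ℝ → ℝ := fun s => v (s, b) * w (s - σ, b) - v (s, 0) * w (s - σ, 0)
      - ∫ t in (0:ℝ)..b, vt (s, t) * w (s - σ, t) with hG
    have c1 : Continuous fun s => ∫ t in (0:ℝ)..b, vt (s, t) * w (s - σ, t) :=
      continuous_integral_param (f := fun p => vt (p.1, p.2) * w (p.1 - σ, p.2)) (by fun_prop) 0 b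
    have per : Function.Periodic G 1 := by
      intro s
      have e : s + 1 - σ = s - σ + 1 := by ring
      simp only [hG, e, pv, pw, pvt]
    have step : ∀ s, ∫ t in (0:ℝ)..b, v (s + σ, t) * wt (s, t) = G (s + σ) := by
      intro s
      rw [intervalIntegral.integral_mul_deriv_eq_deriv_mul (u := fun t => v (s + σ, t))
        (v := fun t => w (s, t)) (fun t _ => dvt (s + σ) t) (fun t _ => dwt s t)
        (ii (by fun_prop) _ _) (ii (by fun_prop) _ _)]
      simp only [hG, add_sub_cancel_right]
    simp only [step]
    rw [intervalIntegral.integral_comp_add_right, ← intervalIntegral.integral_sub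
      (ii (by fun_prop) _ _) (ii c1 _ _), zero_add, add_comm 1 σ,
      per.intervalIntegral_add_eq σ 0, zero_add]
  -- differentiating the two sides at `σ = 0`
  have d1 := hasDerivAt_integral_param₂ (f := fun p => v (p.2.1 + p.1, p.2.2) * wt p.2)
    (f' := fun p => vs (p.2.1 + p.1, p.2.2) * wt p.2) (by fun_prop) (by fun_prop)
    (fun σ p => ((dvs (p.1 + σ) p.2).comp_const_add p.1 σ).mul_const (wt p)) 0 1 0 b 0
  have d2 := hasDerivAt_integral_param
    (f := fun p => v (p.2, b) * w (p.2 - p.1, b) - v (p.2, 0) * w (p.2 - p.1, 0))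
    (f' := fun p => v (p.2, b) * -ws (p.2 - p.1, b) - v (p.2, 0) * -ws (p.2 - p.1, 0))
    (by fun_prop) (by fun_prop)
    (fun σ s => (((dws (s - σ) b).comp_const_sub s σ).const_mul (v (s, b))).fun_sub
      (((dws (s - σ) 0).comp_const_sub s σ).const_mul (v (s, 0)))) 0 1 0
  have d3 := hasDerivAt_integral_param₂ (f := fun p => vt p.2 * w (p.2.1 - p.1, p.2.2))
    (f' := fun p => vt p.2 * -ws (p.2.1 - p.1, p.2.2)) (by fun_prop) (by fun_prop)
    (fun σ p => ((dws (p.1 - σ) p.2).comp_const_sub p.1 σ).const_mul (vt p)) 0 1 0 b 0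
  have e := (d1.congr_of_eventuallyEq (Filter.Eventually.of_forall fun σ =>
    (key σ).symm)).unique (d2.sub d3)
  simp only [add_zero, sub_zero, mul_neg] at e
  have i1 : ∀ s, ∫ t in (0:ℝ)..b, (vt (s, t) * ws (s, t) - vs (s, t) * wt (s, t)) =
      (∫ t in (0:ℝ)..b, vt (s, t) * ws (s, t)) - ∫ t in (0:ℝ)..b, vs (s, t) * wt (s, t) :=
    fun s => intervalIntegral.integral_sub (ii (by fun_prop) _ _) (ii (by fun_prop) _ _)
  simp only [i1]
  rw [intervalIntegral.integral_sub, e, intervalIntegral.integral_sub]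
  · simp only [intervalIntegral.integral_neg]
    ring
  · exact ii (by fun_prop) _ _
  · exact ii (by fun_prop) _ _
  · exact ii (continuous_integral_param (f := fun p => vt p * ws p) (by fun_prop) 0 b) _ _
  · exact ii (continuous_integral_param (f := fun p => vs p * wt p) (by fun_prop) 0 b) _ _

/-- A trace inequality with absorption: the boundary value is controlled with a factor `1 / 2` in
front of the derivative term, at the price of `2 * L ^ 2` in front of the lower-order term. -/
lemma sq_le_of_zero_right {u u' : ℝ → ℝ} (hu' : Continuous u')
    (h : ∀ t, HasDerivAt u (u' t) t) {d L : ℝ} (hd : 0 < d) (hud : u d = 0) :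
    L * u 0 ^ 2 ≤ ∫ t in (0:ℝ)..d, ((1 / 2) * u' t ^ 2 + 2 * L ^ 2 * u t ^ 2) := by
  have hu : Continuous u := continuous_iff_continuousAt.2 fun t => (h t).continuousAt
  have e : ∫ t in (0:ℝ)..d, -(L * (2 * u t * u' t)) = L * u 0 ^ 2 := by
    rw [intervalIntegral.integral_eq_sub_of_hasDerivAt (f := fun t => -(L * u t ^ 2))]
    · simp [hud]
    · intro t _
      simpa using (((h t).fun_pow 2).const_mul L).fun_neg
    · exact (by fun_prop : Continuous _).intervalIntegrable _ _
  rw [← e]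
  refine intervalIntegral.integral_mono_on hd.le
    ((by fun_prop : Continuous _).intervalIntegrable _ _)
    ((by fun_prop : Continuous _).intervalIntegrable _ _) fun t _ => ?_
  nlinarith [sq_nonneg (u' t + 2 * L * u t)]

/-- The null-Lagrangian identity combined with the trace inequality on a two-dimensional slice
normal to the boundary: `v` vanishes on the top, and the bottom boundary term is dominated by
`L * v ^ 2`. -/
lemma slice_bound {v w vs vt ws wt : ℝ × ℝ → ℝ}
    (hv : Continuous v) (hw : Continuous w) (hvs : Continuous vs) (hvt : Continuous vt)
    (hws : Continuous ws) (hwt : Continuous wt)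
    (dvs : ∀ s t, HasDerivAt (fun x => v (x, t)) (vs (s, t)) s)
    (dvt : ∀ s t, HasDerivAt (fun x => v (s, x)) (vt (s, t)) t)
    (dws : ∀ s t, HasDerivAt (fun x => w (x, t)) (ws (s, t)) s)
    (dwt : ∀ s t, HasDerivAt (fun x => w (s, x)) (wt (s, t)) t)
    (pv : ∀ s t, v (s + 1, t) = v (s, t)) (pw : ∀ s t, w (s + 1, t) = w (s, t))
    (pvt : ∀ s t, vt (s + 1, t) = vt (s, t)) {d L : ℝ} (hd : 0 < d)
    (hvd : ∀ s, v (s, d) = 0) (hv0 : ∀ s, -(v (s, 0) * ws (s, 0)) ≤ L * v (s, 0) ^ 2) :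
    ∫ s in (0:ℝ)..1, ∫ t in (0:ℝ)..d, (vt (s, t) * ws (s, t) - vs (s, t) * wt (s, t)) ≤
      ∫ s in (0:ℝ)..1, ∫ t in (0:ℝ)..d, ((1 / 2) * vt (s, t) ^ 2 + 2 * L ^ 2 * v (s, t) ^ 2) := by
  rw [integral_jacobian hv hw hvs hvt hws hwt dvs dvt dws dwt pv pw pvt d]
  simp only [hvd, zero_mul, intervalIntegral.integral_zero, zero_sub]
  rw [← intervalIntegral.integral_neg]
  refine intervalIntegral.integral_mono_on zero_le_one
    ((by fun_prop : Continuous _).intervalIntegrable _ _)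
    ((continuous_integral_param (f := fun p => (1 / 2) * vt p ^ 2 + 2 * L ^ 2 * v p ^ 2)
      (by fun_prop) 0 d).intervalIntegrable _ _) fun s _ => ?_
  exact (hv0 s).trans (sq_le_of_zero_right (u := fun t => v (s, t)) (u' := fun t => vt (s, t))
    (by fun_prop) (dvt s) hd (hvd s))

/-! ### Partial derivatives of `C¹` and `C²` functions -/

lemma hasDerivAt_pd1 {f : ℝ × ℝ × ℝ → ℝ} (hf : ContDiff ℝ 1 f) (x y z : ℝ) :
    HasDerivAt (fun s => f (s, y, z)) (pd1 f (x, y, z)) x :=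
  ((hf.differentiable one_ne_zero) (x, y, z)).hasFDerivAt.comp_hasDerivAt x
    ((hasDerivAt_id x).prodMk (hasDerivAt_const x (y, z)))

lemma hasDerivAt_pd2 {f : ℝ × ℝ × ℝ → ℝ} (hf : ContDiff ℝ 1 f) (x y z : ℝ) :
    HasDerivAt (fun s => f (x, s, z)) (pd2 f (x, y, z)) y :=
  ((hf.differentiable one_ne_zero) (x, y, z)).hasFDerivAt.comp_hasDerivAt y
    ((hasDerivAt_const y x).prodMk ((hasDerivAt_id y).prodMk (hasDerivAt_const y z)))

lemma hasDerivAt_pd3 {f : ℝ × ℝ × ℝ → ℝ} (hf : ContDiff ℝ 1 f) (x y z : ℝ) :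
    HasDerivAt (fun s => f (x, y, s)) (pd3 f (x, y, z)) z :=
  ((hf.differentiable one_ne_zero) (x, y, z)).hasFDerivAt.comp_hasDerivAt z
    ((hasDerivAt_const z x).prodMk ((hasDerivAt_const z y).prodMk (hasDerivAt_id z)))

lemma contDiff_fderiv_apply {f : ℝ × ℝ × ℝ → ℝ} (hf : ContDiff ℝ 2 f) (v : ℝ × ℝ × ℝ) :
    ContDiff ℝ 1 fun x => fderiv ℝ f x v :=
  (hf.fderiv_right (m := 1) (by norm_num)).clm_apply contDiff_const

lemma continuous_fderiv_apply {f : ℝ × ℝ × ℝ → ℝ} (hf : ContDiff ℝ 1 f) (v : ℝ × ℝ × ℝ) :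
    Continuous fun x => fderiv ℝ f x v :=
  (hf.continuous_fderiv one_ne_zero).clm_apply continuous_const

lemma fderiv_apply_periodic {f : ℝ × ℝ × ℝ → ℝ} {a : ℝ × ℝ × ℝ} (h : ∀ x, f (x + a) = f x)
    (v x : ℝ × ℝ × ℝ) : fderiv ℝ f (x + a) v = fderiv ℝ f x v := by
  rw [← fderiv_comp_add_right, funext h]

lemma fderiv_apply_comm {f : ℝ × ℝ × ℝ → ℝ} (hf : ContDiff ℝ 2 f) (v w x : ℝ × ℝ × ℝ) :
    fderiv ℝ (fun y => fderiv ℝ f y v) x w = fderiv ℝ (fun y => fderiv ℝ f y w) x v := by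
  have hd : DifferentiableAt ℝ (fderiv ℝ f) x :=
    (hf.fderiv_right (m := 1) (by norm_num)).differentiable one_ne_zero x
  have hs := hf.contDiffAt.isSymmSndFDerivAt (x := x) (by simp)
  rw [fderiv_clm_apply hd (by fun_prop), fderiv_clm_apply hd (by fun_prop)]
  simpa using hs w v

/-! ### Iterated integrals over the box -/

lemma integral_swap {f : ℝ × ℝ → ℝ} (hf : Continuous f) (a b c d : ℝ) :
    ∫ x in a..b, ∫ y in c..d, f (x, y) = ∫ y in c..d, ∫ x in a..b, f (x, y) :=
  intervalIntegral_intervalIntegral_swap (F := fun x y => f (x, y))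
    ((hf.continuousOn.integrableOn_compact (isCompact_uIcc.prod isCompact_uIcc)).mono_set
      (Set.prod_mono Set.uIoc_subset_uIcc Set.uIoc_subset_uIcc))

lemma integrableOn_box {f : ℝ × ℝ × ℝ → ℝ} (hf : Continuous f) (d : ℝ) :
    IntegrableOn f (box d) :=
  (hf.continuousOn.integrableOn_compact (isCompact_Icc.prod (isCompact_Icc.prod
    isCompact_Icc))).mono_set (Set.prod_mono Set.Ioo_subset_Icc_self
      (Set.prod_mono Set.Ioo_subset_Icc_self Set.Ioo_subset_Icc_self))

lemma integral_box {f : ℝ × ℝ × ℝ → ℝ} (hf : Continuous f) {d : ℝ} (hd : 0 < d) :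
    ∫ p in box d, f p = ∫ x in (0:ℝ)..1, ∫ y in (0:ℝ)..1, ∫ z in (0:ℝ)..d, f (x, y, z) := by
  have h := integrableOn_box hf d
  unfold box at h ⊢
  rw [Measure.volume_eq_prod] at h ⊢
  rw [setIntegral_prod _ h, intervalIntegral.integral_of_le zero_le_one,
    ← integral_Ioc_eq_integral_Ioo]
  refine integral_congr_ae (Filter.Eventually.of_forall fun x => ?_)
  have h' : IntegrableOn (fun q : ℝ × ℝ => f (x, q)) (Set.Ioo 0 1 ×ˢ Set.Ioo 0 d)
      (volume.prod volume) :=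
    ((by fun_prop : Continuous fun q : ℝ × ℝ => f (x, q)).continuousOn.integrableOn_compact
      (isCompact_Icc.prod isCompact_Icc)).mono_set
      (Set.prod_mono Set.Ioo_subset_Icc_self Set.Ioo_subset_Icc_self)
  simp only
  rw [Measure.volume_eq_prod, setIntegral_prod _ h', intervalIntegral.integral_of_le zero_le_one,
    ← integral_Ioc_eq_integral_Ioo]
  simp only [intervalIntegral.integral_of_le hd.le, integral_Ioc_eq_integral_Ioo]

lemma integral_mono_param {f g : ℝ × ℝ → ℝ} {a b c d : ℝ} (hab : a ≤ b) (hf : Continuous f)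
    (hg : Continuous g) (h : ∀ x, ∫ y in c..d, f (x, y) ≤ ∫ y in c..d, g (x, y)) :
    ∫ x in a..b, ∫ y in c..d, f (x, y) ≤ ∫ x in a..b, ∫ y in c..d, g (x, y) :=
  intervalIntegral.integral_mono_on hab
    ((continuous_integral_param hf c d).intervalIntegrable _ _)
    ((continuous_integral_param hg c d).intervalIntegrable _ _) fun x _ => h x


/-- Fubini with the first two variables exchanged. -/
lemma integral_box_swap {f : ℝ × ℝ × ℝ → ℝ} (hf : Continuous f) {d : ℝ} (hd : 0 < d) :
    ∫ p in box d, f p = ∫ y in (0:ℝ)..1, ∫ x in (0:ℝ)..1, ∫ z in (0:ℝ)..d, f (x, y, z) := by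
  rw [integral_box hf hd]
  exact integral_swap (f := fun q => ∫ z in (0:ℝ)..d, f (q.1, q.2, z))
    (continuous_integral_param (X := ℝ × ℝ) (f := fun q => f (q.1.1, q.1.2, q.2))
      (by fun_prop) 0 d) 0 1 0 1

lemma integral_box_eq_zero {f : ℝ × ℝ × ℝ → ℝ} (hf : Continuous f) {d : ℝ} (hd : 0 < d)
    (h : ∀ z, ∫ x in (0:ℝ)..1, ∫ y in (0:ℝ)..1, f (x, y, z) = 0) : ∫ p in box d, f p = 0 := by
  have e : ∀ x, ∫ y in (0:ℝ)..1, ∫ z in (0:ℝ)..d, f (x, y, z) =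
      ∫ z in (0:ℝ)..d, ∫ y in (0:ℝ)..1, f (x, y, z) := fun x =>
    integral_swap (f := fun q => f (x, q)) (by fun_prop) 0 1 0 d
  rw [integral_box hf hd]
  simp only [e]
  rw [integral_swap (f := fun q => ∫ y in (0:ℝ)..1, f (q.1, y, q.2))
    (continuous_integral_param (X := ℝ × ℝ) (f := fun q => f (q.1.1, q.2, q.1.2))
      (by fun_prop) 0 1) 0 1 0 d]
  simp [h]

lemma integral_box_mono {f g : ℝ × ℝ × ℝ → ℝ} (hf : Continuous f) (hg : Continuous g) {d : ℝ}
    (hd : 0 < d) (h : ∀ x, ∫ y in (0:ℝ)..1, ∫ z in (0:ℝ)..d, f (x, y, z) ≤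
      ∫ y in (0:ℝ)..1, ∫ z in (0:ℝ)..d, g (x, y, z)) :
    ∫ p in box d, f p ≤ ∫ p in box d, g p := by
  rw [integral_box hf hd, integral_box hg hd]
  exact integral_mono_param (f := fun q => ∫ z in (0:ℝ)..d, f (q.1, q.2, z))
    (g := fun q => ∫ z in (0:ℝ)..d, g (q.1, q.2, z)) zero_le_one
    (continuous_integral_param (X := ℝ × ℝ) (f := fun q => f (q.1.1, q.1.2, q.2))
      (by fun_prop) 0 d)
    (continuous_integral_param (X := ℝ × ℝ) (f := fun q => g (q.1.1, q.1.2, q.2))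
      (by fun_prop) 0 d) h

lemma integral_box_mono_swap {f g : ℝ × ℝ × ℝ → ℝ} (hf : Continuous f) (hg : Continuous g) {d : ℝ}
    (hd : 0 < d) (h : ∀ y, ∫ x in (0:ℝ)..1, ∫ z in (0:ℝ)..d, f (x, y, z) ≤
      ∫ x in (0:ℝ)..1, ∫ z in (0:ℝ)..d, g (x, y, z)) :
    ∫ p in box d, f p ≤ ∫ p in box d, g p := by
  rw [integral_box_swap hf hd, integral_box_swap hg hd]
  exact integral_mono_param (f := fun q => ∫ z in (0:ℝ)..d, f (q.2, q.1, z))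
    (g := fun q => ∫ z in (0:ℝ)..d, g (q.2, q.1, z)) zero_le_one
    (continuous_integral_param (X := ℝ × ℝ) (f := fun q => f (q.1.2, q.1.1, q.2))
      (by fun_prop) 0 d)
    (continuous_integral_param (X := ℝ × ℝ) (f := fun q => g (q.1.2, q.1.1, q.2))
      (by fun_prop) 0 d) h

/-! ### The Hessian estimate -/

/-- The tangential derivative of the boundary condition `r = (L / 2) sin (2 u)`. -/
lemma hasDerivAt_bc {u r : ℝ → ℝ} {u' r' s L : ℝ} (hu : HasDerivAt u u' s)
    (hr : HasDerivAt r r' s) (h : ∀ x, r x = L / 2 * sin (2 * u x)) :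
    r' = L * cos (2 * u s) * u' := by
  rw [funext h] at hr
  rw [hr.unique ((hu.const_mul 2).sin.const_mul (L / 2))]
  ring

lemma neg_mul_bc_le {L : ℝ} (hL : 0 < L) (a c : ℝ) :
    -(a * (L * cos c * a)) ≤ L * a ^ 2 := by
  nlinarith [mul_nonneg hL.le (mul_nonneg (sq_nonneg a)
    (by linarith [neg_one_le_cos c] : 0 ≤ cos c + 1))]

/-- Since `|∇²φ|² - (Δφ)²` is twice the sum of the three negated principal `2 × 2` minors of the
Hessian, bounds on the integrals of those minors suffice; the mixed derivatives on the right-hand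
sides of `J13` and `J23` are absorbed by half of the Hessian integral. -/
lemma integral_hessSq_le_of_minors {L d : ℝ} {φ : ℝ × ℝ × ℝ → ℝ} (hφ : ContDiff ℝ 2 φ)
    (J12 : ∫ p in box d, (pd2 (pd1 φ) p * pd1 (pd2 φ) p - pd1 (pd1 φ) p * pd2 (pd2 φ) p) = 0)
    (J13 : ∫ p in box d, (pd3 (pd1 φ) p * pd1 (pd3 φ) p - pd1 (pd1 φ) p * pd3 (pd3 φ) p) ≤
      ∫ p in box d, ((1 / 2) * pd3 (pd1 φ) p ^ 2 + 2 * L ^ 2 * pd1 φ p ^ 2))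
    (J23 : ∫ p in box d, (pd3 (pd2 φ) p * pd2 (pd3 φ) p - pd2 (pd2 φ) p * pd3 (pd3 φ) p) ≤
      ∫ p in box d, ((1 / 2) * pd3 (pd2 φ) p ^ 2 + 2 * L ^ 2 * pd2 φ p ^ 2)) :
    (∫ x in box d, hessSq φ x) ≤
      (2 + 8 * L ^ 2) * ((∫ x in box d, (lap φ x) ^ 2) + ∫ x in box d, gradSq φ x) := by
  have h1 : ContDiff ℝ 1 φ := hφ.of_le (by norm_num)
  have hP : ContDiff ℝ 1 (pd1 φ) := contDiff_fderiv_apply hφ _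
  have hQ : ContDiff ℝ 1 (pd2 φ) := contDiff_fderiv_apply hφ _
  have hR : ContDiff ℝ 1 (pd3 φ) := contDiff_fderiv_apply hφ _
  have cP := hP.continuous
  have cQ := hQ.continuous
  have cR := hR.continuous
  have cP1 : Continuous (pd1 (pd1 φ)) := continuous_fderiv_apply hP _
  have cP2 : Continuous (pd2 (pd1 φ)) := continuous_fderiv_apply hP _
  have cP3 : Continuous (pd3 (pd1 φ)) := continuous_fderiv_apply hP _
  have cQ1 : Continuous (pd1 (pd2 φ)) := continuous_fderiv_apply hQ _
  have cQ2 : Continuous (pd2 (pd2 φ)) := continuous_fderiv_apply hQ _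
  have cQ3 : Continuous (pd3 (pd2 φ)) := continuous_fderiv_apply hQ _
  have cR1 : Continuous (pd1 (pd3 φ)) := continuous_fderiv_apply hR _
  have cR2 : Continuous (pd2 (pd3 φ)) := continuous_fderiv_apply hR _
  have cR3 : Continuous (pd3 (pd3 φ)) := continuous_fderiv_apply hR _
  have e12 : ∀ x, pd2 (pd1 φ) x = pd1 (pd2 φ) x := fun x => fderiv_apply_comm hφ _ _ x
  have e13 : ∀ x, pd3 (pd1 φ) x = pd1 (pd3 φ) x := fun x => fderiv_apply_comm hφ _ _ x
  have e23 : ∀ x, pd3 (pd2 φ) x = pd2 (pd3 φ) x := fun x => fderiv_apply_comm hφ _ _ x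
  have cH : Continuous (hessSq φ) := by unfold hessSq; fun_prop
  have cL : Continuous (lap φ) := by unfold lap; fun_prop
  have cG : Continuous (gradSq φ) := by unfold gradSq; fun_prop
  have ib : ∀ {f : ℝ × ℝ × ℝ → ℝ}, Continuous f → Integrable f (volume.restrict (box d)) :=
    fun hf => integrableOn_box hf d
  set F12 : ℝ × ℝ × ℝ → ℝ := fun p =>
    pd2 (pd1 φ) p * pd1 (pd2 φ) p - pd1 (pd1 φ) p * pd2 (pd2 φ) p with hF12
  set F13 : ℝ × ℝ × ℝ → ℝ := fun p =>
    pd3 (pd1 φ) p * pd1 (pd3 φ) p - pd1 (pd1 φ) p * pd3 (pd3 φ) p with hF13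
  set F23 : ℝ × ℝ × ℝ → ℝ := fun p =>
    pd3 (pd2 φ) p * pd2 (pd3 φ) p - pd2 (pd2 φ) p * pd3 (pd3 φ) p with hF23
  set G13 : ℝ × ℝ × ℝ → ℝ := fun p =>
    (1 / 2) * pd3 (pd1 φ) p ^ 2 + 2 * L ^ 2 * pd1 φ p ^ 2 with hG13
  set G23 : ℝ × ℝ × ℝ → ℝ := fun p =>
    (1 / 2) * pd3 (pd2 φ) p ^ 2 + 2 * L ^ 2 * pd2 φ p ^ 2 with hG23
  have cF12 : Continuous F12 := by fun_prop
  have cF13 : Continuous F13 := by fun_prop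
  have cF23 : Continuous F23 := by fun_prop
  have cG13 : Continuous G13 := by fun_prop
  have cG23 : Continuous G23 := by fun_prop
  have hess_eq : ∫ p in box d, hessSq φ p = (∫ p in box d, lap φ p ^ 2) +
      2 * ((∫ p in box d, F12 p) + (∫ p in box d, F13 p) + ∫ p in box d, F23 p) := by
    rw [← integral_add (ib cF12) (ib cF13), ← integral_add (ib (by fun_prop)) (ib cF23),
      ← integral_const_mul, ← integral_add (ib (by fun_prop)) (ib (by fun_prop))]
    congr 1
    ext p
    simp only [hF12, hF13, hF23, hessSq, lap, e12, e13, e23]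
    ring
  have absorb : 2 * ((∫ p in box d, G13 p) + ∫ p in box d, G23 p) ≤
      (1 / 2) * (∫ p in box d, hessSq φ p) + 4 * L ^ 2 * ∫ p in box d, gradSq φ p := by
    rw [← integral_add (ib cG13) (ib cG23), ← integral_const_mul, ← integral_const_mul,
      ← integral_const_mul, ← integral_add (ib (by fun_prop)) (ib (by fun_prop))]
    refine integral_mono (ib (by fun_prop)) (ib (by fun_prop)) fun p => ?_
    simp only [hG13, hG23, hessSq, gradSq, e12, e13, e23]
    nlinarith [sq_nonneg (pd1 (pd1 φ) p), sq_nonneg (pd2 (pd2 φ) p), sq_nonneg (pd3 (pd3 φ) p),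
      sq_nonneg (pd1 (pd2 φ) p), mul_nonneg (sq_nonneg L) (sq_nonneg (pd3 φ p))]
  have lap_nonneg : 0 ≤ ∫ p in box d, lap φ p ^ 2 := integral_nonneg fun p => sq_nonneg _
  have grad_nonneg : 0 ≤ ∫ p in box d, gradSq φ p :=
    integral_nonneg fun p => by simp only [gradSq, Pi.zero_apply]; positivity
  have L_lap_nonneg := mul_nonneg (sq_nonneg L) lap_nonneg
  rw [J12] at hess_eq
  generalize (∫ p in box d, lap φ p ^ 2) = A at *
  generalize (∫ p in box d, gradSq φ p) = B at *
  generalize (∫ p in box d, hessSq φ p) = H at *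
  linarith

theorem stmt13 (L d : ℝ) (hL : 0 < L) (hd : 0 < d) :
    ∃ C : ℝ, 0 < C ∧ ∀ φ : ℝ × ℝ × ℝ → ℝ, ContDiff ℝ 2 φ →
      (∀ x₁ x₂ x₃ : ℝ, φ (x₁ + 1, x₂, x₃) = φ (x₁, x₂, x₃) ∧
        φ (x₁, x₂ + 1, x₃) = φ (x₁, x₂, x₃)) →
      (∀ x₁ x₂ : ℝ, φ (x₁, x₂, d) = 0) →
      (∀ x₁ x₂ : ℝ,
        pd3 φ (x₁, x₂, 0) = (L / 2) * Real.sin (2 * φ (x₁, x₂, 0))) →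
      (∫ x in box d, hessSq φ x) ≤
        C * ((∫ x in box d, (lap φ x) ^ 2) + ∫ x in box d, gradSq φ x) := by
  refine ⟨2 + 8 * L ^ 2, by positivity, fun φ hφ hper htop hbot => ?_⟩
  have h1 : ContDiff ℝ 1 φ := hφ.of_le (by norm_num)
  have hP : ContDiff ℝ 1 (pd1 φ) := contDiff_fderiv_apply hφ _
  have hQ : ContDiff ℝ 1 (pd2 φ) := contDiff_fderiv_apply hφ _
  have hR : ContDiff ℝ 1 (pd3 φ) := contDiff_fderiv_apply hφ _
  have cφ := h1.continuous
  have cP := hP.continuous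
  have cQ := hQ.continuous
  have cR := hR.continuous
  have cP1 : Continuous (pd1 (pd1 φ)) := continuous_fderiv_apply hP _
  have cP2 : Continuous (pd2 (pd1 φ)) := continuous_fderiv_apply hP _
  have cP3 : Continuous (pd3 (pd1 φ)) := continuous_fderiv_apply hP _
  have cQ1 : Continuous (pd1 (pd2 φ)) := continuous_fderiv_apply hQ _
  have cQ2 : Continuous (pd2 (pd2 φ)) := continuous_fderiv_apply hQ _
  have cQ3 : Continuous (pd3 (pd2 φ)) := continuous_fderiv_apply hQ _
  have cR1 : Continuous (pd1 (pd3 φ)) := continuous_fderiv_apply hR _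
  have cR2 : Continuous (pd2 (pd3 φ)) := continuous_fderiv_apply hR _
  have cR3 : Continuous (pd3 (pd3 φ)) := continuous_fderiv_apply hR _
  have per1 : ∀ x, φ (x + (1, 0, 0)) = φ x := fun ⟨x, y, z⟩ => by
    simpa using (hper x y z).1
  have per2 : ∀ x, φ (x + (0, 1, 0)) = φ x := fun ⟨x, y, z⟩ => by
    simpa using (hper x y z).2
  have shift1 : ∀ {f : ℝ × ℝ × ℝ → ℝ}, (∀ x, f (x + (1, 0, 0)) = f x) →
      ∀ x y z, f (x + 1, y, z) = f (x, y, z) := fun h x y z => by simpa using h (x, y, z)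
  have shift2 : ∀ {f : ℝ × ℝ × ℝ → ℝ}, (∀ x, f (x + (0, 1, 0)) = f x) →
      ∀ x y z, f (x, y + 1, z) = f (x, y, z) := fun h x y z => by simpa using h (x, y, z)
  have P_top : ∀ x y, pd1 φ (x, y, d) = 0 := fun x y =>
    (hasDerivAt_pd1 h1 x y d).unique (by simpa only [htop] using hasDerivAt_const x (0 : ℝ))
  have Q_top : ∀ x y, pd2 φ (x, y, d) = 0 := fun x y =>
    (hasDerivAt_pd2 h1 x y d).unique (by simpa only [htop] using hasDerivAt_const y (0 : ℝ))
  have R1_bot : ∀ x y, pd1 (pd3 φ) (x, y, 0) = L * cos (2 * φ (x, y, 0)) * pd1 φ (x, y, 0) :=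
    fun x y => hasDerivAt_bc (u := fun s => φ (s, y, 0)) (r := fun s => pd3 φ (s, y, 0))
      (hasDerivAt_pd1 h1 x y 0) (hasDerivAt_pd1 hR x y 0)
      fun s => hbot s y
  have R2_bot : ∀ x y, pd2 (pd3 φ) (x, y, 0) = L * cos (2 * φ (x, y, 0)) * pd2 φ (x, y, 0) :=
    fun x y => hasDerivAt_bc (u := fun s => φ (x, s, 0)) (r := fun s => pd3 φ (x, s, 0))
      (hasDerivAt_pd2 h1 x y 0) (hasDerivAt_pd2 hR x y 0)
      fun s => hbot x s
  have J12 : ∫ p in box d, (pd2 (pd1 φ) p * pd1 (pd2 φ) p - pd1 (pd1 φ) p * pd2 (pd2 φ) p) = 0 := by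
    refine integral_box_eq_zero (by fun_prop) hd fun z => ?_
    have := integral_jacobian (v := fun q => pd1 φ (q.1, q.2, z)) (w := fun q => pd2 φ (q.1, q.2, z))
      (vs := fun q => pd1 (pd1 φ) (q.1, q.2, z)) (vt := fun q => pd2 (pd1 φ) (q.1, q.2, z))
      (ws := fun q => pd1 (pd2 φ) (q.1, q.2, z)) (wt := fun q => pd2 (pd2 φ) (q.1, q.2, z))
      (by fun_prop) (by fun_prop) (by fun_prop) (by fun_prop) (by fun_prop) (by fun_prop)
      (fun s t => hasDerivAt_pd1 hP s t z) (fun s t => hasDerivAt_pd2 hP s t z)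
      (fun s t => hasDerivAt_pd1 hQ s t z) (fun s t => hasDerivAt_pd2 hQ s t z)
      (fun s t => shift1 (fderiv_apply_periodic per1 _) s t z)
      (fun s t => shift1 (fderiv_apply_periodic per1 _) s t z)
      (fun s t => shift1 (fderiv_apply_periodic (fderiv_apply_periodic per1 _) _) s t z) 1
    rw [this, sub_eq_zero]
    -- the boundary terms on `y = 1` and `y = 0` agree by periodicity in `y`
    congr 1
    ext s
    have a1 := shift2 (f := pd1 φ) (fderiv_apply_periodic per2 _) s 0 z
    have a2 := shift2 (f := pd1 (pd2 φ))
      (fderiv_apply_periodic (fderiv_apply_periodic per2 _) _) s 0 z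
    rw [zero_add] at a1 a2
    simp only [a1, a2]
  have J13 : ∫ p in box d, (pd3 (pd1 φ) p * pd1 (pd3 φ) p - pd1 (pd1 φ) p * pd3 (pd3 φ) p) ≤
      ∫ p in box d, ((1 / 2) * pd3 (pd1 φ) p ^ 2 + 2 * L ^ 2 * pd1 φ p ^ 2) := by
    refine integral_box_mono_swap (by fun_prop) (by fun_prop) hd fun y => ?_
    exact slice_bound (v := fun q => pd1 φ (q.1, y, q.2)) (w := fun q => pd3 φ (q.1, y, q.2))
      (vs := fun q => pd1 (pd1 φ) (q.1, y, q.2)) (vt := fun q => pd3 (pd1 φ) (q.1, y, q.2))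
      (ws := fun q => pd1 (pd3 φ) (q.1, y, q.2)) (wt := fun q => pd3 (pd3 φ) (q.1, y, q.2))
      (by fun_prop) (by fun_prop) (by fun_prop) (by fun_prop) (by fun_prop) (by fun_prop)
      (fun s t => hasDerivAt_pd1 hP s y t) (fun s t => hasDerivAt_pd3 hP s y t)
      (fun s t => hasDerivAt_pd1 hR s y t) (fun s t => hasDerivAt_pd3 hR s y t)
      (fun s t => shift1 (fderiv_apply_periodic per1 _) s y t)
      (fun s t => shift1 (fderiv_apply_periodic per1 _) s y t)
      (fun s t => shift1 (fderiv_apply_periodic (fderiv_apply_periodic per1 _) _) s y t) hd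
      (fun s => P_top s y) (fun s => by simpa only [R1_bot] using neg_mul_bc_le hL _ _)
  have J23 : ∫ p in box d, (pd3 (pd2 φ) p * pd2 (pd3 φ) p - pd2 (pd2 φ) p * pd3 (pd3 φ) p) ≤
      ∫ p in box d, ((1 / 2) * pd3 (pd2 φ) p ^ 2 + 2 * L ^ 2 * pd2 φ p ^ 2) := by
    refine integral_box_mono (by fun_prop) (by fun_prop) hd fun x => ?_
    exact slice_bound (v := fun q => pd2 φ (x, q.1, q.2)) (w := fun q => pd3 φ (x, q.1, q.2))
      (vs := fun q => pd2 (pd2 φ) (x, q.1, q.2)) (vt := fun q => pd3 (pd2 φ) (x, q.1, q.2))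
      (ws := fun q => pd2 (pd3 φ) (x, q.1, q.2)) (wt := fun q => pd3 (pd3 φ) (x, q.1, q.2))
      (by fun_prop) (by fun_prop) (by fun_prop) (by fun_prop) (by fun_prop) (by fun_prop)
      (fun s t => hasDerivAt_pd2 hQ x s t) (fun s t => hasDerivAt_pd3 hQ x s t)
      (fun s t => hasDerivAt_pd2 hR x s t) (fun s t => hasDerivAt_pd3 hR x s t)
      (fun s t => shift2 (fderiv_apply_periodic per2 _) x s t)
      (fun s t => shift2 (fderiv_apply_periodic per2 _) x s t)
      (fun s t => shift2 (fderiv_apply_periodic (fderiv_apply_periodic per2 _) _) x s t) hd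
      (fun s => Q_top x s) (fun s => by simpa only [R2_bot] using neg_mul_bc_le hL _ _)
  exact integral_hessSq_le_of_minors hφ J12 J13 J23
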